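/- arXiv:1603.03526 — 2 statements merged into one kernel-verified Lean document; each statement's English description precedes it below -/
import Mathlib

section
/- Let m ≥ 2 and c₁, c₂ > 0, and let G be a bipartite graph on n vertices with girth greater than 2m such that c₁·n^{1/m} ≤ deg(v) ≤ c₂·n^{1/m} for all vertices v. Then for every ℓ with m+1 ≤ ℓ ≤ 2m, the number of cycles of length 2ℓ in G is at least α_ℓ·n^{2ℓ/m}, where α_ℓ = (9/(2ℓ·c₂))·(c₁^{m+1}/10)^{2ℓ−2m+1} (for n sufficiently large in terms of m, c₁, c₂). -/
open SimpleGraph Real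

def SimpleGraph.IsBip {V : Type*} (G : SimpleGraph V) : Prop :=
  ∃ A : Set V, ∀ ⦃u v : V⦄, G.Adj u v → (u ∈ A ↔ v ∉ A)

/-- The number of cycles of length `L` in `G`, counted as subgraphs: a cycle is
identified with its edge set. -/
noncomputable def cycleCount {V : Type*} [DecidableEq V] (G : SimpleGraph V) (L : ℕ) : ℕ :=
  Nat.card {s : Finset (Sym2 V) // ∃ (u : V) (w : G.Walk u u),
    w.IsCycle ∧ w.length = L ∧ w.edges.toFinset = s}


namespace MSC
open SimpleGraph Walk

lemma path_unique {V : Type} {G : SimpleGraph V} {M : ℕ} (hg : (M : ℕ∞) < G.egirth) {u v : V}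
    {p q : G.Walk u v} (hp : p.IsPath) (hq : q.IsPath) (hl : p.length + q.length ≤ M) : p = q := by
  by_contra h
  obtain ⟨u', v', p', q', h1, h2, hc⟩ := hp.exists_isCycle_of_ne hq h
  have h3 := egirth_le_length hc
  have h4 : p'.length ≤ p.length := by
    obtain ⟨a, b, e⟩ := h1
    rw [e, length_append, length_append]
    omega
  have h5 : q'.length ≤ q.length := by
    obtain ⟨a, b, e⟩ := h2
    rw [e, length_append, length_append]
    omega
  rw [length_append, length_reverse] at h3
  have h6 := lt_of_lt_of_le hg h3
  have h7 : M < p'.length + q'.length := by exact_mod_cast h6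
  omega

lemma snd_of_adj_mem {V : Type} {G : SimpleGraph V} {M : ℕ} (hg : (M : ℕ∞) < G.egirth)
    {u v w : V} {p : G.Walk v w} (hp : p.IsPath) (hl : p.length + 1 ≤ M) (h : G.Adj u v)
    (hu : u ∈ p.support) : u = p.snd := by
  classical
  have h1 : p.takeUntil u hu = h.symm.toWalk := by
    refine path_unique hg (hp.takeUntil hu) (by simp [h.ne']) ?_
    have := p.length_takeUntil_le_length hu
    simp
    omega
  have h2 := p.take_spec hu
  rw [h1] at h2
  rw [← h2]
  simp

lemma cons_path {V : Type} {G : SimpleGraph V} {M : ℕ} (hg : (M : ℕ∞) < G.egirth)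
    {u v w : V} {p : G.Walk v w} (hp : p.IsPath) (hl : p.length + 1 ≤ M) (h : G.Adj u v)
    (hu : u ≠ p.snd) : (cons h p).IsPath :=
  (cons_isPath_iff h p).2 ⟨hp, fun h' => hu (snd_of_adj_mem hg hp hl h h')⟩

lemma walk_color {V : Type} {G : SimpleGraph V} {A : Set V}
    (hA : ∀ ⦃u v : V⦄, G.Adj u v → (u ∈ A ↔ v ∉ A)) {u v : V} (p : G.Walk u v) :
    ((u ∈ A) ↔ (v ∈ A)) ↔ Even p.length := by
  induction p with
  | nil => simp
  | cons h p ih =>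
    rw [length_cons, Nat.even_add_one, ← ih]
    have := hA h
    tauto

lemma cycle_rigid {V : Type} [DecidableEq V] {G : SimpleGraph V} {u : V} {c c' : G.Walk u u}
    (hc : c.IsCycle) (hc' : c'.IsCycle) (he : c.edges.toFinset = c'.edges.toFinset)
    (hs : c.snd = c'.snd) : c = c' := by
  have hL : c.length = c'.length := by
    rw [← length_edges, ← length_edges, ← List.toFinset_card_of_nodup hc.edges_nodup,
      ← List.toFinset_card_of_nodup hc'.edges_nodup, he]
  have key : ∀ i, i ≤ c.length → c.getVert i = c'.getVert i := by
    intro i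
    induction i using Nat.strong_induction_on with
    | _ i ih =>
      intro hi
      rcases Nat.lt_or_ge i 2 with h2 | h2
      · interval_cases i
        · simp
        · exact hs
      · obtain ⟨j, rfl⟩ : ∃ j, i = j + 2 := ⟨i - 2, by omega⟩
        have hj1 := ih (j + 1) (by omega) (by omega)
        have hj0 := ih j (by omega) (by omega)
        have hmem : s(c'.getVert (j + 1), c'.getVert (j + 2)) ∈ c.edges := by
          rw [← List.mem_toFinset, he, List.mem_toFinset, mk_mem_edges_iff_exists]
          exact ⟨j + 1, by omega, rfl⟩
        rw [mk_mem_edges_iff_exists] at hmem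
        obtain ⟨k, hk, hke⟩ := hmem
        rw [← hj1, Sym2.eq_iff] at hke
        rcases hke with ⟨h1, h2⟩ | ⟨h1, h2⟩
        · have : k = j + 1 := hc.getVert_injOn' (by simp; omega) (by simp; omega) h1
          subst this
          exact h2
        · have : k + 1 = j + 1 := hc.getVert_injOn (by simp; omega) (by simp; omega) h2
          have : k = j := by omega
          subst this
          exfalso
          have h5 := hc'.getVert_sub_one_ne_getVert_add_one (i := k + 1) (by omega)
          apply h5
          simp
          rw [← hj0, h1]
  exact ext_getVert_le_length hL key

/-- counting cycles up to rotation and reflection -/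
lemma card_le_cycleCount {V : Type} [Fintype V] [DecidableEq V] {G : SimpleGraph V} {L : ℕ}
    (T : Finset (Σ w : V, G.Walk w w)) (hT : ∀ x ∈ T, x.2.IsCycle ∧ x.2.length = L) :
    T.card ≤ 2 * L * cycleCount G L := by
  classical
  let f : (Σ w : V, G.Walk w w) → Finset (Sym2 V) := fun x => x.2.edges.toFinset
  have h1 : T.card ≤ 2 * L * (T.image f).card := by
    refine Finset.card_le_mul_card_image T _ ?_
    intro s hs
    obtain ⟨x0, hx0, hx0s⟩ := Finset.mem_image.1 hs
    have hsL : s.card = L := by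
      rw [← hx0s, ← (hT x0 hx0).2, ← length_edges]
      exact List.toFinset_card_of_nodup (hT x0 hx0).1.edges_nodup
    have h2 : (s.biUnion fun e => (Finset.univ.filter fun ab : V × V => s(ab.1, ab.2) = e)).card
        ≤ s.card * 2 := by
      refine Finset.card_biUnion_le_card_mul _ _ _ ?_
      intro e _
      induction e with
      | _ a b =>
        refine (Finset.card_le_card (t := {(a, b), (b, a)}) ?_).trans Finset.card_le_two
        intro ⟨x, y⟩ h
        simp at h ⊢
        exact h
    rw [hsL, mul_comm] at h2
    refine le_trans ?_ h2
    refine Finset.card_le_card_of_injOn (fun x => (x.1, x.2.snd)) ?_ ?_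
    · rintro ⟨w, c⟩ hx
      rw [Finset.mem_coe, Finset.mem_filter] at hx
      obtain ⟨hx, hxs⟩ := hx
      simp only [Finset.coe_biUnion, Set.mem_iUnion, Finset.mem_coe, Finset.mem_filter,
        Finset.mem_univ, true_and, exists_prop, exists_eq_right']
      rw [← hxs]
      simp only [f, List.mem_toFinset]
      exact mk_start_snd_mem_edges (hT _ hx).1.not_nil
    · rintro ⟨w, c⟩ hx ⟨w', c'⟩ hx' h
      rw [Finset.mem_coe, Finset.mem_filter] at hx hx'
      simp only [Prod.mk.injEq] at h
      obtain ⟨h1, h2⟩ := h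
      subst h1
      have := cycle_rigid (hT _ hx.1).1 (hT _ hx'.1).1 (hx.2.trans hx'.2.symm) h2
      simp only at this
      rw [this]
  refine h1.trans (Nat.mul_le_mul_left _ ?_)
  unfold cycleCount
  rw [Nat.card_eq_fintype_card, Fintype.card_subtype]
  refine Finset.card_le_card ?_
  intro s hs
  obtain ⟨x, hx, hxs⟩ := Finset.mem_image.1 hs
  rw [Finset.mem_filter]
  exact ⟨Finset.mem_univ _, x.1, x.2, (hT x hx).1, (hT x hx).2, hxs⟩

lemma extend {V : Type} {G : SimpleGraph V} {w : V} (S : Finset (Σ v, G.Walk v w))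
    (P : (Σ v, G.Walk v w) → Prop) (d : ℝ)
    (h : ∀ x ∈ S, ∃ B : Finset V, d ≤ B.card ∧
      ∀ u ∈ B, ∃ h : G.Adj u x.1, P ⟨u, cons h x.2⟩) :
    ∃ S' : Finset (Σ v, G.Walk v w), (∀ x ∈ S', P x) ∧ d * S.card ≤ S'.card := by
  classical
  choose! B hB hP using h
  let f : (Σ _ : (Σ v, G.Walk v w), V) → (Σ v, G.Walk v w) := fun y =>
    if h : G.Adj y.2 y.1.1 then ⟨y.2, cons h y.1.2⟩ else y.1
  refine ⟨(S.sigma B).image f, ?_, ?_⟩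
  · intro x hx
    obtain ⟨⟨y, u⟩, hy, rfl⟩ := Finset.mem_image.1 hx
    rw [Finset.mem_sigma] at hy
    obtain ⟨h1, h2⟩ := hP y hy.1 u hy.2
    simp only [f]
    rw [dif_pos h1]
    exact h2
  · rw [Finset.card_image_of_injOn, Finset.card_sigma]
    · push_cast
      calc d * S.card = ∑ x ∈ S, d := by simp [mul_comm]
        _ ≤ _ := Finset.sum_le_sum hB
    · rintro ⟨⟨v, p⟩, u⟩ hy ⟨⟨v', p'⟩, u'⟩ hy' he
      simp only [Finset.coe_sigma, Set.mem_sigma_iff, Finset.mem_coe] at hy hy'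
      obtain ⟨h1, -⟩ := hP _ hy.1 u hy.2
      obtain ⟨h1', -⟩ := hP _ hy'.1 u' hy'.2
      simp only [f] at he
      rw [dif_pos h1, dif_pos h1'] at he
      simp only [Sigma.mk.injEq] at he
      obtain ⟨rfl, he⟩ := he
      have he := eq_of_heq he
      simp only [cons.injEq] at he
      obtain ⟨rfl, he⟩ := he
      rw [eq_of_heq he]

/-- pruning a bipartite relation to large minimum degree -/
lemma prune {V : Type} [DecidableEq V] (F : Finset (V × V)) (t : ℝ) (ht : 0 ≤ t) :
    ∃ F' ⊆ F, (F.card : ℝ) - t * ((F.image Prod.fst).card + (F.image Prod.snd).card) ≤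
        F'.card - t * ((F'.image Prod.fst).card + (F'.image Prod.snd).card) ∧
      (∀ x ∈ F'.image Prod.fst, t ≤ ((F'.filter fun e => e.1 = x).card : ℝ)) ∧
      (∀ x ∈ F'.image Prod.snd, t ≤ ((F'.filter fun e => e.2 = x).card : ℝ)) := by
  obtain ⟨F', hF', hmax⟩ := Finset.exists_max_image F.powerset
    (fun K => (K.card : ℝ) - t * ((K.image Prod.fst).card + (K.image Prod.snd).card))
    ⟨F, Finset.mem_powerset_self F⟩
  have gen : ∀ (f g : V × V → V), (∀ K ∈ F.powerset,
      (K.card : ℝ) - t * ((K.image f).card + (K.image g).card) ≤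
      (F'.card : ℝ) - t * ((F'.image f).card + (F'.image g).card)) →
      ∀ x ∈ F'.image f, t ≤ ((F'.filter fun e => f e = x).card : ℝ) := by
    intro f g hm x hx
    have h1 := hm (F'.filter fun e => ¬ f e = x)
      (Finset.mem_powerset.2 ((Finset.filter_subset _ _).trans (Finset.mem_powerset.1 hF')))
    have h2 : ((F'.filter fun e => f e = x).card : ℝ) + (F'.filter fun e => ¬ f e = x).card
        = F'.card := by
      exact_mod_cast Finset.card_filter_add_card_filter_not (s := F') (fun e => f e = x)
    have h3 : (((F'.filter fun e => ¬ f e = x).image f).card : ℝ) + 1 ≤ (F'.image f).card := by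
      have : ((F'.filter fun e => ¬ f e = x).image f) ⊆ (F'.image f).erase x := by
        intro y hy
        simp only [Finset.mem_image, Finset.mem_filter, Finset.mem_erase] at hy ⊢
        obtain ⟨e, ⟨he, hne⟩, rfl⟩ := hy
        exact ⟨hne, e, he, rfl⟩
      have h4 := Finset.card_le_card this
      have h5 := Finset.card_erase_add_one hx
      exact_mod_cast (by omega : _ + 1 ≤ _)
    have h4 : (((F'.filter fun e => ¬ f e = x).image g).card : ℝ) ≤ (F'.image g).card := by
      exact_mod_cast Finset.card_le_card (Finset.image_subset_image (Finset.filter_subset _ _))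
    have h5 := mul_le_mul_of_nonneg_left (add_le_add h3 h4) ht
    linarith
  refine ⟨F', Finset.mem_powerset.1 hF', hmax F (Finset.mem_powerset_self F),
    gen Prod.fst Prod.snd hmax, gen Prod.snd Prod.fst ?_⟩
  intro K hK
  have := hmax K hK
  linarith

end MSC

namespace MSC
open SimpleGraph Walk

/-- `x` is joined to `w` by a path of length `j` -/
def Lv {V : Type} (G : SimpleGraph V) (w : V) (j : ℕ) (x : V) : Prop :=
  ∃ p : G.Walk x w, p.IsPath ∧ p.length = j

lemma Lv.unique {V : Type} {G : SimpleGraph V} {M : ℕ} (hg : (M : ℕ∞) < G.egirth) {w x : V}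
    {i j : ℕ} (hi : Lv G w i x) (hj : Lv G w j x) (h : i + j ≤ M) : i = j := by
  obtain ⟨p, hp, rfl⟩ := hi
  obtain ⟨q, hq, rfl⟩ := hj
  rw [path_unique hg hp hq h]

lemma level_of_mem {V : Type} {G : SimpleGraph V} {w x u : V} {p : G.Walk x w} (hp : p.IsPath)
    (hu : u ∈ p.support) : ∃ i ≤ p.length, Lv G w i u ∧ (i = p.length → u = x) := by
  classical
  refine ⟨(p.dropUntil u hu).length, p.length_dropUntil_le_length hu,
    ⟨p.dropUntil u hu, hp.dropUntil hu, rfl⟩, ?_⟩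
  intro h
  by_contra hne
  have := length_dropUntil_lt_length hu hne
  omega

lemma adj_level {V : Type} {G : SimpleGraph V} {m : ℕ} (hg : ((2 * m : ℕ) : ℕ∞) < G.egirth)
    {w x z : V} {p : G.Walk x w} (hp : p.IsPath) (hpl : p.length = m) (h : G.Adj x z) {j : ℕ}
    (hz : Lv G w j z) (hj : j < m) : j + 1 = m ∧ z = p.snd := by
  obtain ⟨q, hq, hql⟩ := hz
  have hx : x ∉ q.support := by
    intro hx
    obtain ⟨i, hi, hL, -⟩ := level_of_mem hq hx
    have := hL.unique hg ⟨p, hp, hpl⟩ (by omega)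
    omega
  have h1 : (cons h q).IsPath := (cons_isPath_iff h q).2 ⟨hq, hx⟩
  have h2 : cons h q = p := path_unique hg h1 hp (by simp; omega)
  rw [← h2]
  rw [← h2] at hpl
  simp at hpl
  simp
  omega

lemma branch_inj {V : Type} {G : SimpleGraph V} {m : ℕ} (hg : ((2 * m : ℕ) : ℕ∞) < G.egirth)
    {w z y₁ y₂ c : V} {p₁ : G.Walk y₁ w} {p₂ : G.Walk y₂ w} (h₁ : p₁.IsPath) (h₂ : p₂.IsPath)
    (hl₁ : p₁.length = m) (hl₂ : p₂.length = m) (a₁ : G.Adj z y₁) (a₂ : G.Adj z y₂)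
    (z₁ : z ∉ p₁.support) (z₂ : z ∉ p₂.support) (c₁ : c ∈ p₁.support) (c₂ : c ∈ p₂.support)
    (hc : c ≠ w) : y₁ = y₂ := by
  classical
  have q₁ : (cons a₁ (p₁.takeUntil c c₁)).IsPath := (cons_isPath_iff _ _).2
    ⟨h₁.takeUntil c₁, fun h => z₁ (p₁.support_takeUntil_subset_support c₁ h)⟩
  have q₂ : (cons a₂ (p₂.takeUntil c c₂)).IsPath := (cons_isPath_iff _ _).2
    ⟨h₂.takeUntil c₂, fun h => z₂ (p₂.support_takeUntil_subset_support c₂ h)⟩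
  have l₁ := length_takeUntil_lt_length c₁ hc
  have l₂ := length_takeUntil_lt_length c₂ hc
  have := path_unique hg q₁ q₂ (by simp; omega)
  have h3 := congrArg Walk.snd this
  simpa using h3

lemma penultimate_dropUntil {V : Type} [DecidableEq V] {G : SimpleGraph V} {w x u : V}
    (p : G.Walk x w) (hu : u ∈ p.support) (hw : u ≠ w) :
    p.penultimate = (p.dropUntil u hu).penultimate := by
  have h := p.take_spec hu
  have hn : 0 < (p.dropUntil u hu).length := by
    rcases Nat.eq_zero_or_pos (p.dropUntil u hu).length with h0 | h0
    · exact absurd (eq_of_length_eq_zero h0) hw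
    · exact h0
  conv_lhs => rw [← h]
  unfold penultimate
  rw [getVert_append, length_append, if_neg (by omega)]
  congr 1
  omega

lemma penultimate_eq {V : Type} {G : SimpleGraph V} {m : ℕ}
    (hg : ((2 * m : ℕ) : ℕ∞) < G.egirth)
    {w y₁ y₂ u : V} {p₁ : G.Walk y₁ w} {p₂ : G.Walk y₂ w} (h₁ : p₁.IsPath) (h₂ : p₂.IsPath)
    (hl₁ : p₁.length = m) (hl₂ : p₂.length = m) (u₁ : u ∈ p₁.support) (u₂ : u ∈ p₂.support)
    (hu : u ≠ w) : p₁.penultimate = p₂.penultimate := by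
  classical
  rw [penultimate_dropUntil p₁ u₁ hu, penultimate_dropUntil p₂ u₂ hu]
  have l₁ := p₁.length_dropUntil_le_length u₁
  have l₂ := p₂.length_dropUntil_le_length u₂
  rw [path_unique hg (h₁.dropUntil u₁) (h₂.dropUntil u₂) (by omega)]

/-- number of vertices at level `m` -/
lemma level_card {V : Type} [Fintype V] {G : SimpleGraph V} {m : ℕ} (hm : 1 ≤ m)
    (hg : ((2 * m : ℕ) : ℕ∞) < G.egirth) (a : ℝ) (ha : 0 ≤ a)
    (N : V → Finset V) (hN : ∀ v u, u ∈ N v ↔ G.Adj v u)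
    (hdeg : ∀ v, a + 1 ≤ ((N v).card : ℝ)) (w : V)
    (X : Finset V) (hX : ∀ x, x ∈ X ↔ Lv G w m x) : a ^ m ≤ (X.card : ℝ) := by
  classical
  have key : ∀ j ≤ m, ∃ S : Finset (Σ v, G.Walk v w),
      (∀ x ∈ S, x.2.IsPath ∧ x.2.length = j) ∧ a ^ j ≤ (S.card : ℝ) := by
    intro j
    induction j with
    | zero =>
      intro _
      refine ⟨{⟨w, nil⟩}, ?_, by simp⟩
      intro x hx
      rw [Finset.mem_singleton] at hx
      subst hx
      simp
    | succ j ih =>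
      intro hj
      obtain ⟨S, hS, hc⟩ := ih (by omega)
      obtain ⟨S', hS', hc'⟩ := extend S (fun x => x.2.IsPath ∧ x.2.length = j + 1) a (by
        rintro ⟨v, p⟩ hx
        obtain ⟨hp, hpl⟩ := hS _ hx
        simp only at hp hpl
        refine ⟨(N v).erase p.snd, ?_, ?_⟩
        · have h1 := hdeg v
          have h2 := Finset.pred_card_le_card_erase (s := N v) (a := p.snd)
          have h3 : (N v).card ≤ ((N v).erase p.snd).card + 1 := by omega
          have h4 : ((N v).card : ℝ) ≤ ((N v).erase p.snd).card + 1 := by exact_mod_cast h3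
          linarith
        · intro u hu
          rw [Finset.mem_erase, hN] at hu
          refine ⟨hu.2.symm, cons_path hg hp (by omega) _ hu.1, ?_⟩
          simp [hpl])
      refine ⟨S', hS', le_trans ?_ hc'⟩
      rw [pow_succ, mul_comm]
      exact mul_le_mul_of_nonneg_left hc ha
  obtain ⟨S, hS, hc⟩ := key m le_rfl
  refine hc.trans ?_
  norm_cast
  refine Finset.card_le_card_of_injOn Sigma.fst ?_ ?_
  · rintro ⟨v, p⟩ hx
    rw [Finset.mem_coe, hX]
    exact ⟨p, hS _ hx⟩
  · rintro ⟨v, p⟩ hx ⟨v', p'⟩ hx' h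
    simp only at h
    subst h
    have h1 := hS _ hx
    have h2 := hS _ hx'
    simp only at h1 h2
    rw [path_unique hg h1.1 h2.1 (by omega)]

/-- `q` followed by `p` is an admissible partial walk -/
def PP {V : Type} {G : SimpleGraph V} {w : V} (m : ℕ) (X Z : Finset V) (i : ℕ) {v x : V}
    (q : G.Walk v x) (p : G.Walk x w) : Prop :=
  p.IsPath ∧ p.length = m ∧ q.IsPath ∧ q.length = i ∧ (Even i → v ∈ X) ∧ (Odd i → v ∈ Z) ∧
    ∀ u ∈ q.support, u ∈ X ∨ u ∈ Z

lemma PP.step {V : Type} {G : SimpleGraph V} {w : V} {m : ℕ} {X Z : Finset V} {i : ℕ} {v x : V}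
    {q : G.Walk v x} {p : G.Walk x w} (hg : ((2 * m : ℕ) : ℕ∞) < G.egirth)
    (h : PP m X Z i q p) (hi : i + 1 ≤ 2 * m) {u : V} (hu : G.Adj u v)
    (he : Even i → u ∈ Z) (ho : Odd i → u ∈ X) (hne : u ≠ q.snd) :
    PP m X Z (i + 1) (cons hu q) p := by
  obtain ⟨h1, h2, h3, h4, h5, h6, h7⟩ := h
  refine ⟨h1, h2, cons_path hg h3 (by omega) hu hne, by simp [h4], ?_, ?_, ?_⟩
  · intro hh
    rw [Nat.even_add_one, Nat.not_even_iff_odd] at hh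
    exact ho hh
  · intro hh
    rw [Nat.odd_add_one, Nat.not_odd_iff_even] at hh
    exact he hh
  · intro y hy
    rw [support_cons, List.mem_cons] at hy
    rcases hy with rfl | hy
    · rcases Nat.even_or_odd i with hh | hh
      · exact Or.inr (he hh)
      · exact Or.inl (ho hh)
    · exact h7 y hy

lemma PP.cycle {V : Type} {G : SimpleGraph V} {w : V} {m k : ℕ} {X Z : Finset V} {y x : V}
    {q : G.Walk y x} {p : G.Walk x w} (hm : 2 ≤ m) (hg : ((2 * m : ℕ) : ℕ∞) < G.egirth)
    (hX : ∀ x ∈ X, Lv G w m x) (hZ : ∀ z ∈ Z, ∀ j ≤ m, ¬ Lv G w j z)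
    (h : PP m X Z (2 * k) q p) {r : G.Walk y w} (hr : r.IsPath) (hrl : r.length = m)
    (hb : r.penultimate ≠ p.penultimate) :
    (r.reverse.append (q.append p)).IsCycle ∧
      (r.reverse.append (q.append p)).length = 2 * (m + k) := by
  obtain ⟨h1, h2, h3, h4, h5, h6, h7⟩ := h
  refine ⟨?_, by simp; omega⟩
  have hcommon : ∀ {x' : V} {p' : G.Walk x' w}, p'.IsPath → p'.length = m →
      ∀ u, u ∈ q.support → u ∈ p'.support → u = x' := by
    intro x' p' hp' hl' u hu hu'
    obtain ⟨i, hi, hL, hlast⟩ := level_of_mem hp' hu'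
    rcases h7 u hu with hh | hh
    · have := hL.unique hg (hX u hh) (by omega)
      exact hlast (by omega)
    · exact absurd hL (hZ u hh i (by omega))
  have htail : ∀ {a b : V} {p' : G.Walk a b}, p'.IsPath → a ∉ p'.support.tail := by
    intro a b p' hp'
    have := hp'.support_nodup
    rw [← cons_tail_support, List.nodup_cons] at this
    exact this.1
  have hqp : (q.append p).IsPath := by
    rw [isPath_def, support_append, List.nodup_append']
    refine ⟨h3.support_nodup, h1.support_nodup.tail, ?_⟩
    intro u hu hu'
    have := hcommon h1 h2 u hu (List.mem_of_mem_tail hu')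
    subst this
    exact htail h1 hu'
  refine IsPath.isCycle_append hr.reverse hqp ?_ (Or.inl (by simp; omega))
  intro u hu hu'
  have huw : u ≠ w := by
    rintro rfl
    exact htail hr.reverse hu
  have hur : u ∈ r.support := by
    have := List.mem_of_mem_tail hu
    simpa using this
  rw [tail_support_append, List.mem_append] at hu'
  rcases hu' with hu' | hu'
  · have := hcommon hr hrl u (List.mem_of_mem_tail hu') hur
    subst this
    exact htail h3 hu'
  · exact hb (penultimate_eq hg hr h1 hrl h2 hur (List.mem_of_mem_tail hu') huw)

end MSC

namespace MSC
open SimpleGraph Walk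

lemma cycles_of_dense {V : Type} [DecidableEq V] {G : SimpleGraph V} {m k : ℕ}
    (hm : 2 ≤ m) (hk : 1 ≤ k) (hkm : k ≤ m) (hg : ((2 * m : ℕ) : ℕ∞) < G.egirth) (w : V)
    (F : Finset (V × V)) (hF : ∀ e ∈ F, G.Adj e.1 e.2)
    (hX : ∀ x ∈ F.image Prod.fst, Lv G w m x)
    (hZ : ∀ z ∈ F.image Prod.snd, ∀ j ≤ m, ¬ Lv G w j z) (t : ℝ) (ht : 2 ≤ t)
    (hd1 : ∀ x ∈ F.image Prod.fst, t ≤ ((F.filter fun e => e.1 = x).card : ℝ))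
    (hd2 : ∀ x ∈ F.image Prod.snd, t ≤ ((F.filter fun e => e.2 = x).card : ℝ)) :
    ∃ T : Finset (G.Walk w w), (∀ c ∈ T, c.IsCycle ∧ c.length = 2 * (m + k)) ∧
      ((F.image Prod.fst).card : ℝ) * (t - 2) ^ (2 * k) ≤ (T.card : ℝ) := by
  classical
  set X := F.image Prod.fst with hXdef
  set Z := F.image Prod.snd with hZdef
  have hrow : ∀ x ∈ X, ∃ B : Finset V, t ≤ (B.card : ℝ) ∧ ∀ z ∈ B, z ∈ Z ∧ G.Adj z x := by
    intro x hx
    refine ⟨(F.filter fun e => e.1 = x).image Prod.snd, ?_, ?_⟩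
    · rw [Finset.card_image_of_injOn]
      · exact hd1 x hx
      · rintro ⟨a, b⟩ h ⟨a', b'⟩ h' hh
        simp only [Finset.coe_filter, Set.mem_ofPred_eq] at h h' hh
        rw [h.2, h'.2, hh]
    · intro z hz
      obtain ⟨⟨a, b⟩, he, rfl⟩ := Finset.mem_image.1 hz
      obtain ⟨he', rfl⟩ := Finset.mem_filter.1 he
      exact ⟨Finset.mem_image_of_mem _ he', (hF _ he').symm⟩
  have hcol : ∀ z ∈ Z, ∃ B : Finset V, t ≤ (B.card : ℝ) ∧ ∀ x ∈ B, x ∈ X ∧ G.Adj x z := by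
    intro z hz
    refine ⟨(F.filter fun e => e.2 = z).image Prod.fst, ?_, ?_⟩
    · rw [Finset.card_image_of_injOn]
      · exact hd2 z hz
      · rintro ⟨a, b⟩ h ⟨a', b'⟩ h' hh
        simp only [Finset.coe_filter, Set.mem_ofPred_eq] at h h' hh
        rw [h.2, h'.2, hh]
    · intro x hx
      obtain ⟨⟨a, b⟩, he, rfl⟩ := Finset.mem_image.1 hx
      obtain ⟨he', rfl⟩ := Finset.mem_filter.1 he
      exact ⟨Finset.mem_image_of_mem _ he', hF _ he'⟩
  clear_value X Z
  have herase : ∀ (B : Finset V) (u : V), (B.card : ℝ) - 1 ≤ ((B.erase u).card : ℝ) := by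
    intro B u
    have h2 := Finset.pred_card_le_card_erase (s := B) (a := u)
    have h3 : B.card ≤ (B.erase u).card + 1 := by omega
    have h4 : (B.card : ℝ) ≤ (B.erase u).card + 1 := by exact_mod_cast h3
    linarith
  have h0 : (0 : ℝ) ≤ t - 2 := by linarith
  let P : ℕ → (Σ v, G.Walk v w) → Prop := fun i y =>
    ∃ (x : V) (q : G.Walk y.1 x) (p : G.Walk x w), y.2 = q.append p ∧ PP m X Z i q p
  have key : ∀ i, i + 1 ≤ 2 * k → ∃ S : Finset (Σ v, G.Walk v w),
      (∀ y ∈ S, P i y) ∧ (X.card : ℝ) * (t - 2) ^ i ≤ (S.card : ℝ) := by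
    intro i
    induction i with
    | zero =>
      intro _
      choose! p hp hpl using fun (x : X) => hX x.1 x.2
      refine ⟨Finset.univ.image fun x : X => ⟨x.1, p x⟩, ?_, ?_⟩
      · intro y hy
        obtain ⟨x, -, rfl⟩ := Finset.mem_image.1 hy
        refine ⟨x.1, nil, p x, by simp, hp x, hpl x, by simp, by simp, ?_, by simp, ?_⟩
        · intro _
          exact x.2
        · intro u hu
          simp at hu
          subst hu
          exact Or.inl x.2
      · rw [Finset.card_image_of_injective]
        · simp
        · intro x x' h
          simp only [Sigma.mk.injEq] at h
          exact Subtype.ext h.1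
    | succ i ih =>
      intro hi
      obtain ⟨S, hS, hc⟩ := ih (by omega)
      obtain ⟨S', hS', hc'⟩ := extend S (P (i + 1)) (t - 2) (by
        rintro ⟨v, r⟩ hy
        obtain ⟨x, q, p, hr, hpp⟩ := hS _ hy
        simp only at q p hr hpp
        obtain ⟨-, -, -, -, h5, h6, -⟩ := id hpp
        rcases Nat.even_or_odd i with hh | hh
        · obtain ⟨B, hB, hB'⟩ := hrow v (h5 hh)
          refine ⟨B.erase q.snd, by linarith [herase B q.snd], ?_⟩
          intro u hu
          rw [Finset.mem_erase] at hu
          have hu2 := hB' u hu.2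
          refine ⟨hu2.2, x, cons hu2.2 q, p, by simp [hr], ?_⟩
          refine hpp.step hg (by omega) hu2.2 (fun _ => hu2.1) ?_ hu.1
          intro ho
          exact absurd hh (Nat.not_even_iff_odd.2 ho)
        · obtain ⟨B, hB, hB'⟩ := hcol v (h6 hh)
          refine ⟨B.erase q.snd, by linarith [herase B q.snd], ?_⟩
          intro u hu
          rw [Finset.mem_erase] at hu
          have hu2 := hB' u hu.2
          refine ⟨hu2.2, x, cons hu2.2 q, p, by simp [hr], ?_⟩
          refine hpp.step hg (by omega) hu2.2 ?_ (fun _ => hu2.1) hu.1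
          intro ho
          exact absurd ho (Nat.not_even_iff_odd.2 hh))
      refine ⟨S', hS', le_trans ?_ hc'⟩
      rw [pow_succ, ← mul_assoc, mul_comm]
      exact mul_le_mul_of_nonneg_left hc h0
  obtain ⟨S, hS, hc⟩ := key (2 * k - 1) (by omega)
  have hodd : Odd (2 * k - 1) := ⟨k - 1, by omega⟩
  obtain ⟨S', hS', hc'⟩ := extend S (fun y => ∃ (x : V) (q : G.Walk y.1 x) (p : G.Walk x w)
      (r : G.Walk y.1 w), y.2 = q.append p ∧ PP m X Z (2 * k) q p ∧ r.IsPath ∧ r.length = m ∧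
      r.penultimate ≠ p.penultimate) (t - 2) (by
    rintro ⟨v, r⟩ hy
    obtain ⟨x, q, p, hr, hpp⟩ := hS _ hy
    simp only at q p hr hpp
    obtain ⟨hp, hpl, -, -, -, h6, -⟩ := id hpp
    obtain ⟨B, hB, hB'⟩ := hcol v (h6 hodd)
    have hZv := hZ v (h6 hodd)
    let bad : V → Prop := fun y => ∃ r : G.Walk y w, r.IsPath ∧ r.length = m ∧
      r.penultimate = p.penultimate
    have hbad : (B.filter bad).card ≤ 1 := by
      rw [Finset.card_le_one]
      intro y₁ hy₁ y₂ hy₂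
      obtain ⟨hy₁, r₁, hr₁, hl₁, e₁⟩ := Finset.mem_filter.1 hy₁
      obtain ⟨hy₂, r₂, hr₂, hl₂, e₂⟩ := Finset.mem_filter.1 hy₂
      have hnot : ∀ {y : V} {r : G.Walk y w}, r.IsPath → r.length = m → v ∉ r.support := by
        intro y r hr hl hv
        obtain ⟨j, hj, hL, -⟩ := level_of_mem hr hv
        exact hZv j (by omega) hL
      refine branch_inj hg hr₁ hr₂ hl₁ hl₂ (hB' _ hy₁).2.symm (hB' _ hy₂).2.symm
        (hnot hr₁ hl₁) (hnot hr₂ hl₂) (c := p.penultimate) ?_ ?_ ?_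
      · rw [← e₁]
        exact getVert_mem_support _ _
      · rw [← e₂]
        exact getVert_mem_support _ _
      · refine (adj_penultimate ?_).ne
        rw [not_nil_iff_lt_length]
        omega
    refine ⟨(B.filter fun y => ¬ bad y).erase q.snd, ?_, ?_⟩
    · have h1 := herase (B.filter fun y => ¬ bad y) q.snd
      have h2 := Finset.card_filter_add_card_filter_not (s := B) bad
      have h3 : (B.card : ℝ) ≤ 1 + (B.filter fun y => ¬ bad y).card := by
        exact_mod_cast (by omega : B.card ≤ 1 + (B.filter fun y => ¬ bad y).card)
      linarith
    · intro u hu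
      rw [Finset.mem_erase, Finset.mem_filter] at hu
      obtain ⟨hu1, huB, hub⟩ := hu
      have hu2 := hB' u huB
      obtain ⟨r', hr', hrl'⟩ := hX u hu2.1
      refine ⟨hu2.2, x, cons hu2.2 q, p, r', by simp [hr], ?_, hr', hrl', ?_⟩
      · have := hpp.step hg (by omega) hu2.2 (fun h => absurd h (Nat.not_even_iff_odd.2 hodd))
          (fun _ => hu2.1) hu1
        rwa [show 2 * k - 1 + 1 = 2 * k by omega] at this
      · intro he
        exact hub ⟨r', hr', hrl', he⟩)
  have hcyc : ∀ y : S', ∃ r : G.Walk y.1.1 w, r.length = m ∧ (r.reverse.append y.1.2).IsCycle ∧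
      (r.reverse.append y.1.2).length = 2 * (m + k) := by
    intro y
    obtain ⟨x, q, p, r, h1, h2, h3, h4, h5⟩ := hS' y.1 y.2
    refine ⟨r, h4, ?_⟩
    rw [h1]
    exact h2.cycle hm hg hX hZ h3 h4 h5
  choose r hrl hr1 hr2 using hcyc
  refine ⟨Finset.univ.image fun y : S' => (r y).reverse.append y.1.2, ?_, ?_⟩
  · intro c hcm
    obtain ⟨y, -, rfl⟩ := Finset.mem_image.1 hcm
    exact ⟨hr1 y, hr2 y⟩
  · rw [Finset.card_image_of_injective]
    · rw [Finset.card_univ, Fintype.card_coe]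
      refine le_trans ?_ hc'
      rw [show 2 * k = (2 * k - 1) + 1 by omega, pow_succ, ← mul_assoc, mul_comm]
      exact mul_le_mul_of_nonneg_left hc h0
    · rintro ⟨⟨y, a⟩, hy⟩ ⟨⟨y', a'⟩, hy'⟩ he
      simp only at he
      have hv : ∀ i, a.getVert i = a'.getVert i := by
        intro i
        have := congrArg (fun c => c.getVert (m + i)) he
        simp only [getVert_append, length_reverse, hrl] at this
        simpa using this
      have h0 := hv 0
      simp only [getVert_zero] at h0
      subst h0
      have := ext_getVert hv
      subst this
      rfl

lemma per_root {V : Type} [Fintype V] [DecidableEq V] {G : SimpleGraph V} {m k : ℕ}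
    (hm : 2 ≤ m) (hk : 1 ≤ k) (hkm : k ≤ m) (hg : ((2 * m : ℕ) : ℕ∞) < G.egirth)
    (hbip : G.IsBip) (a C t : ℝ) (ha : 0 ≤ a) (hC : 0 < C) (ht : 2 ≤ t)
    (hdeg : ∀ v, a + 1 ≤ ((G.neighborSet v).ncard : ℝ) ∧ ((G.neighborSet v).ncard : ℝ) ≤ C)
    (w : V) :
    ∃ T : Finset (G.Walk w w), (∀ c ∈ T, c.IsCycle ∧ c.length = 2 * (m + k)) ∧
      ((a ^ (m + 1) - t * Fintype.card V) / C) * (t - 2) ^ (2 * k) ≤ (T.card : ℝ) := by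
  classical
  obtain ⟨A, hA⟩ := hbip
  let N : V → Finset V := fun v => Finset.univ.filter fun u => G.Adj v u
  have hN : ∀ v u, u ∈ N v ↔ G.Adj v u := by intro v u; simp [N]
  have hNc : ∀ v, (G.neighborSet v).ncard = (N v).card := by
    intro v
    rw [← Set.ncard_coe_finset]
    congr 1
    ext u
    simp [N]
  simp only [hNc] at hdeg
  let X : Finset V := Finset.univ.filter (Lv G w m)
  have hX : ∀ x, x ∈ X ↔ Lv G w m x := by intro x; simp [X]
  have hXc := level_card (by omega) hg a ha N hN (fun v => (hdeg v).1) w X hX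
  let F : Finset (V × V) := Finset.univ.filter fun e =>
    Lv G w m e.1 ∧ G.Adj e.1 e.2 ∧ ¬ Lv G w (m - 1) e.2
  have hF : ∀ e, e ∈ F ↔ Lv G w m e.1 ∧ G.Adj e.1 e.2 ∧ ¬ Lv G w (m - 1) e.2 := by
    intro e; simp [F]
  have hFZ : ∀ e ∈ F, ∀ j ≤ m, ¬ Lv G w j e.2 := by
    intro e he j hj hL
    rw [hF] at he
    obtain ⟨⟨p, hp, hpl⟩, hadj, hn⟩ := he
    rcases Nat.lt_or_ge j m with hlt | hge
    · have := (adj_level hg hp hpl hadj hL hlt).1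
      rw [show j = m - 1 by omega] at hL
      exact hn hL
    · obtain ⟨q, hq, hql⟩ := hL
      have h1 := walk_color hA p
      have h2 := walk_color hA q
      have h3 := hA hadj
      rw [hpl] at h1
      rw [hql, show j = m by omega] at h2
      tauto
  have hFc : a ^ (m + 1) ≤ (F.card : ℝ) := by
    have h1 : (X.sigma fun x => (N x).filter fun z => ¬ Lv G w (m - 1) z).card ≤ F.card := by
      refine Finset.card_le_card_of_injOn (fun y => (y.1, y.2)) ?_ ?_
      · rintro ⟨x, z⟩ h
        simp only [Finset.mem_coe, Finset.mem_sigma, Finset.mem_filter, hN, hX] at h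
        rw [Finset.mem_coe, hF]
        exact h
      · rintro ⟨x, z⟩ _ ⟨x', z'⟩ _ h
        simp only [Prod.mk.injEq] at h
        rw [h.1, h.2]
    have h2 : (X.card : ℝ) * a ≤
        ((X.sigma fun x => (N x).filter fun z => ¬ Lv G w (m - 1) z).card : ℝ) := by
      rw [Finset.card_sigma]
      push_cast
      rw [← nsmul_eq_mul]
      refine Finset.card_nsmul_le_sum _ _ _ ?_
      intro x hx
      obtain ⟨p, hp, hpl⟩ := (hX x).1 hx
      have h3 : ((N x).filter fun z => Lv G w (m - 1) z).card ≤ 1 := by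
        rw [Finset.card_le_one]
        intro z hz z' hz'
        rw [Finset.mem_filter, hN] at hz hz'
        rw [(adj_level hg hp hpl hz.1 hz.2 (by omega)).2,
          (adj_level hg hp hpl hz'.1 hz'.2 (by omega)).2]
      have h4 := Finset.card_filter_add_card_filter_not (s := N x) (fun z => Lv G w (m - 1) z)
      have h5 := (hdeg x).1
      have h6 : ((N x).card : ℝ) ≤ 1 + ((N x).filter fun z => ¬ Lv G w (m - 1) z).card := by
        exact_mod_cast (by omega :
          (N x).card ≤ 1 + ((N x).filter fun z => ¬ Lv G w (m - 1) z).card)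
      linarith
    have h3 : ((X.sigma fun x => (N x).filter fun z => ¬ Lv G w (m - 1) z).card : ℝ) ≤ F.card := by
      exact_mod_cast h1
    calc a ^ (m + 1) = a ^ m * a := pow_succ _ _
      _ ≤ X.card * a := mul_le_mul_of_nonneg_right hXc ha
      _ ≤ _ := h2.trans h3
  obtain ⟨F', hsub, hcard, hd1, hd2⟩ := prune F t (by linarith)
  obtain ⟨T, hT, hTc⟩ := cycles_of_dense hm hk hkm hg w F' (fun e he => ((hF e).1 (hsub he)).2.1)
    (by
      intro x hx
      obtain ⟨e, he, rfl⟩ := Finset.mem_image.1 hx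
      exact ((hF e).1 (hsub he)).1)
    (by
      intro x hx
      obtain ⟨e, he, rfl⟩ := Finset.mem_image.1 hx
      exact hFZ e (hsub he)) t ht hd1 hd2
  refine ⟨T, hT, le_trans ?_ hTc⟩
  refine mul_le_mul_of_nonneg_right ?_ (pow_nonneg (by linarith) _)
  rw [div_le_iff₀ hC]
  have hdisj : ((F.image Prod.fst).card : ℝ) + (F.image Prod.snd).card ≤ Fintype.card V := by
    have : Disjoint (F.image Prod.fst) (F.image Prod.snd) := by
      rw [Finset.disjoint_left]
      intro x hx hx'
      obtain ⟨e, he, rfl⟩ := Finset.mem_image.1 hx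
      obtain ⟨e', he', hee⟩ := Finset.mem_image.1 hx'
      refine hFZ e' he' m le_rfl ?_
      rw [hee]
      exact ((hF e).1 he).1
    have h2 := Finset.card_union_of_disjoint this
    have h3 := Finset.card_le_univ (F.image Prod.fst ∪ F.image Prod.snd)
    rw [h2] at h3
    exact_mod_cast h3
  have hrows : (F'.card : ℝ) ≤ (F'.image Prod.fst).card * C := by
    rw [Finset.card_eq_sum_card_image Prod.fst F']
    push_cast
    rw [← nsmul_eq_mul]
    refine Finset.sum_le_card_nsmul _ _ _ ?_
    intro x _
    refine le_trans ?_ (hdeg x).2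
    norm_cast
    refine Finset.card_le_card_of_injOn Prod.snd ?_ ?_
    · rintro ⟨x', z⟩ h
      rw [Finset.mem_coe, Finset.mem_filter] at h
      obtain ⟨h, rfl⟩ := h
      rw [Finset.mem_coe, hN]
      exact ((hF _).1 (hsub h)).2.1
    · rintro ⟨x', z⟩ h ⟨x'', z'⟩ h' hh
      rw [Finset.mem_coe, Finset.mem_filter] at h h'
      simp only at hh h h'
      rw [hh, h.2, h'.2]
  have h7 := mul_le_mul_of_nonneg_left hdisj (by linarith : (0 : ℝ) ≤ t)
  have h8 : 0 ≤ t * (((F'.image Prod.fst).card : ℝ) + (F'.image Prod.snd).card) := by positivity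
  linarith

end MSC

/-- Let `m ≥ 2` and `c₁, c₂ > 0`. For `n` sufficiently large, every bipartite graph
`G` on `n` vertices with girth greater than `2m` and `c₁·n^{1/m} ≤ deg(v) ≤ c₂·n^{1/m}`
for all `v` has, for every `m+1 ≤ ℓ ≤ 2m`, at least `α_ℓ·n^{2ℓ/m}` cycles of length
`2ℓ`, where `α_ℓ = (9/(2ℓ·c₂))·(c₁^{m+1}/10)^{2ℓ−2m+1}`. -/
theorem many_short_cycles (m : ℕ) (hm : 2 ≤ m) (c₁ c₂ : ℝ) (hc₁ : 0 < c₁) (hc₂ : 0 < c₂) :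
    ∃ N : ℕ, ∀ (V : Type) [Fintype V] [DecidableEq V] (G : SimpleGraph V) (n : ℕ),
      Fintype.card V = n → N ≤ n → G.IsBip → (2 * m : ℕ) < G.egirth →
      (∀ v : V, c₁ * (n : ℝ) ^ ((1 : ℝ) / m) ≤ ((G.neighborSet v).ncard : ℝ) ∧
        ((G.neighborSet v).ncard : ℝ) ≤ c₂ * (n : ℝ) ^ ((1 : ℝ) / m)) →
      ∀ ℓ : ℕ, m + 1 ≤ ℓ → ℓ ≤ 2 * m →
        (9 / (2 * ℓ * c₂)) * (c₁ ^ (m + 1) / 10) ^ (2 * ℓ - 2 * m + 1)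
            * (n : ℝ) ^ ((2 * ℓ : ℝ) / m)
          ≤ (cycleCount G (2 * ℓ) : ℝ) := by
  have hm0 : (0 : ℝ) < m := by exact_mod_cast (by omega : 0 < m)
  set A : ℝ := c₁ ^ (m + 1) with hA
  have hApos : 0 < A := by positivity
  have htend : Filter.Tendsto (fun n : ℕ => (n : ℝ) ^ ((1 : ℝ) / m)) Filter.atTop Filter.atTop :=
    (tendsto_rpow_atTop (by positivity)).comp tendsto_natCast_atTop_atTop
  obtain ⟨N, hN⟩ := Filter.eventually_atTop.1
    (((Filter.tendsto_atTop.1 htend (200 / A)).and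
      (Filter.tendsto_atTop.1 htend (10 * (m + 1) / c₁))).and
      (Filter.tendsto_atTop.1 htend 1))
  refine ⟨N, ?_⟩
  intro V _ _ G n hn hNn hbip hg hdeg ℓ hℓ1 hℓ2
  obtain ⟨⟨hD1, hD2⟩, hD3⟩ := hN n hNn
  have hDm : ((n : ℝ) ^ ((1 : ℝ) / m)) ^ m = n := by
    rw [← Real.rpow_natCast, ← Real.rpow_mul (Nat.cast_nonneg n)]
    rw [one_div, inv_mul_cancel₀ hm0.ne', Real.rpow_one]
  have hDl : (n : ℝ) ^ ((2 * ℓ : ℝ) / m) = ((n : ℝ) ^ ((1 : ℝ) / m)) ^ (2 * ℓ) := by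
    rw [← Real.rpow_natCast, ← Real.rpow_mul (Nat.cast_nonneg n)]
    congr 1
    push_cast
    ring
  rw [hDl]
  clear hDl
  set D : ℝ := (n : ℝ) ^ ((1 : ℝ) / m) with hD
  clear_value D
  obtain ⟨k, rfl⟩ : ∃ k, ℓ = m + k := ⟨ℓ - m, by omega⟩
  rw [show 2 * (m + k) - 2 * m + 1 = 2 * k + 1 by omega]
  have hD0 : 0 < D := by linarith
  have hAD : 200 ≤ A * D := by
    rw [div_le_iff₀ hApos] at hD1
    linarith
  have hcD : 10 * (m + 1) ≤ c₁ * D := by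
    rw [div_le_iff₀ hc₁] at hD2
    linarith
  have hcD0 : 0 < c₁ * D := by positivity
  have hbern : 0.9 * (A * n * D) ≤ (c₁ * D - 1) ^ (m + 1) := by
    have hx : -2 ≤ -(1 / (c₁ * D)) := by
      have : 1 / (c₁ * D) ≤ 1 := by
        rw [div_le_one hcD0]
        linarith
      linarith
    have h1 := one_add_mul_le_pow hx (m + 1)
    have h2 : ((m + 1 : ℕ) : ℝ) * (1 / (c₁ * D)) ≤ 0.1 := by
      rw [mul_one_div, div_le_iff₀ hcD0]
      push_cast
      linarith
    have h3 : c₁ * D - 1 = c₁ * D * (1 + -(1 / (c₁ * D))) := by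
      field_simp
      ring
    have h4 : A * n * D = (c₁ * D) ^ (m + 1) := by
      rw [← hDm, hA]
      ring
    rw [h3, mul_pow, h4, mul_comm]
    exact mul_le_mul_of_nonneg_left (by linarith) (by positivity)
  have hroot := fun w => MSC.per_root (k := k) hm (by omega) (by omega) hg hbip (c₁ * D - 1)
    (c₂ * D) (A * D / 5) (by linarith) (by positivity) (by linarith)
    (fun v => ⟨by linarith [(hdeg v).1], (hdeg v).2⟩) w
  choose T hT hTc using hroot
  have hle := MSC.card_le_cycleCount (G := G) (L := 2 * (m + k)) (Finset.univ.sigma T) (by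
    rintro ⟨w, c⟩ hx
    rw [Finset.mem_sigma] at hx
    exact hT w c hx.2)
  rw [Finset.card_sigma] at hle
  have hle' : ∑ w, ((T w).card : ℝ) ≤ 2 * (2 * (m + k)) * (cycleCount G (2 * (m + k)) : ℝ) := by
    exact_mod_cast hle
  have hY0 : 0 ≤ (A * D / 10) ^ (2 * k) := by positivity
  have hpow : 3.61 * (A * D / 10) ^ (2 * k) ≤ (A * D / 5 - 2) ^ (2 * k) := by
    have h1 : 1.9 * (A * D / 10) ≤ A * D / 5 - 2 := by linarith
    have h2 := pow_le_pow_left₀ (by positivity) h1 (2 * k)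
    refine le_trans ?_ h2
    rw [mul_pow]
    refine mul_le_mul_of_nonneg_right ?_ hY0
    rw [pow_mul]
    calc (3.61 : ℝ) = (1.9 ^ 2) ^ 1 := by norm_num
      _ ≤ (1.9 ^ 2) ^ k := pow_le_pow_right₀ (by norm_num) (by omega)
  have hM : ∀ w, 0.7 * (A * n / c₂) * (3.61 * (A * D / 10) ^ (2 * k)) ≤ ((T w).card : ℝ) := by
    intro w
    refine le_trans ?_ (hTc w)
    refine mul_le_mul ?_ hpow (by positivity) ?_
    · rw [hn, le_div_iff₀ (by positivity)]
      have : 0.7 * (A * n / c₂) * (c₂ * D) = 0.7 * (A * n * D) := by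
        field_simp
      rw [this]
      linarith
    · refine div_nonneg ?_ (by positivity)
      rw [hn]
      have : 0 ≤ A * n * D := by positivity
      linarith
  have hsum := Finset.card_nsmul_le_sum Finset.univ _ _ (fun w _ => hM w)
  rw [Finset.card_univ, hn, nsmul_eq_mul] at hsum
  have hfin := hsum.trans hle'
  have hℓ0 : (0 : ℝ) < m + k := by positivity
  push_cast
  have hlhs : 9 / (2 * ((m : ℝ) + k) * c₂) * (A / 10) ^ (2 * k + 1) * D ^ (2 * (m + k))
      = (1.8 * (n * (A * n / c₂) * (A * D / 10) ^ (2 * k))) / (2 * (2 * (m + k))) := by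
    have : D ^ (2 * (m + k)) = (n : ℝ) ^ 2 * D ^ (2 * k) := by
      rw [← hDm]
      ring
    rw [this, div_pow, div_pow, mul_pow]
    field_simp
    ring
  rw [hlhs, div_le_iff₀ (by positivity)]
  have hQ : 0 ≤ n * (A * n / c₂) * (A * D / 10) ^ (2 * k) := by positivity
  linarith
end

section
/- For every real c > 0 and integers M > m ≥ 2 there exist α > 0 and N such that: if G is a graph on n ≥ N vertices with at least c·n^{1+1/m} edges and girth greater than 2m, then for every ℓ with m+1 ≤ ℓ ≤ M, the number of cycles of length 2ℓ in G is at least α·n^{2ℓ/m}. -/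
open SimpleGraph Real

open Classical in
/-- The finset of paths of length `k` from `x` to `y`. -/
noncomputable def pathSet {V : Type} [Fintype V] (G : SimpleGraph V) (k : ℕ) (x y : V) :
    Finset (G.Walk x y) :=
  (G.finsetWalkLength k x y).filter (fun p => p.IsPath)

lemma mem_pathSet {V : Type} [Fintype V] {G : SimpleGraph V} {k : ℕ} {x y : V}
    {p : G.Walk x y} : p ∈ pathSet G k x y ↔ p.length = k ∧ p.IsPath := by
  classical
  unfold pathSet
  rw [Finset.mem_filter, mem_finsetWalkLength_iff]

lemma path_unique_of_girth {V : Type} {G : SimpleGraph V} {m : ℕ}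
    (hg : (2 * m : ℕ) < G.egirth) {x y : V} {p q : G.Walk x y} (hp : p.IsPath) (hq : q.IsPath)
    (hpl : p.length ≤ m) (hql : q.length ≤ m) : p = q := by
  by_contra h
  obtain ⟨w, -, -, c, hc, hl⟩ := hp.exists_isCycle_length_le_add_of_ne hq h
  have h1 := egirth_le_length hc
  have h2 : ((2 * m : ℕ) : ℕ∞) < (c.length : ℕ∞) := lt_of_lt_of_le hg h1
  have h3 : 2 * m < c.length := by exact_mod_cast h2
  omega

open Classical in
lemma card_pathSet_succ {V : Type} [Fintype V] (G : SimpleGraph V) (k : ℕ) (x y : V) :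
    (pathSet G (k+1) x y).card =
      ∑ w : V, if G.Adj x w then ((pathSet G k w y).filter (fun p => x ∉ p.support)).card
        else 0 := by
  have h : pathSet G (k+1) x y = (Finset.univ : Finset {w // G.Adj x w}).biUnion
      (fun w => ((pathSet G k w y).filter (fun p => x ∉ p.support)).image
        (fun p => Walk.cons w.property p)) := by
    ext p
    simp only [mem_pathSet, Finset.mem_biUnion, Finset.mem_univ, true_and, Finset.mem_image,
      Finset.mem_filter]
    constructor
    · rintro ⟨h1, h2⟩
      cases p with
      | nil => simp at h1
      | cons h p =>
        rw [Walk.cons_isPath_iff] at h2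
        exact ⟨⟨_, h⟩, p, ⟨⟨by simpa using h1, h2.1⟩, h2.2⟩, rfl⟩
    · rintro ⟨w, q, ⟨⟨h1, h2⟩, h3⟩, rfl⟩
      exact ⟨by simp [h1], by simp [Walk.cons_isPath_iff, h2, h3]⟩
  rw [h, Finset.card_biUnion]
  · have hinj : ∀ w : {w // G.Adj x w}, Function.Injective
        (fun p : G.Walk w.1 y => Walk.cons w.property p) := by
      intro w p q h
      cases h
      rfl
    rw [← Finset.sum_filter]
    symm
    refine Finset.sum_bij' (fun w hw => ⟨w, (Finset.mem_filter.1 hw).2⟩) (fun w _ => w.1)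
      ?_ ?_ ?_ ?_ ?_
    · intros; simp
    · intro a _; exact Finset.mem_filter.2 ⟨Finset.mem_univ _, a.2⟩
    · intros; rfl
    · intros; rfl
    · intro w hw
      exact (Finset.card_image_of_injective _ (hinj ⟨w, (Finset.mem_filter.1 hw).2⟩)).symm
  · intro a _ b _ hab
    simp only [Function.onFun]
    rw [Finset.disjoint_left]
    intro p hp hq
    simp only [Finset.mem_image, Finset.mem_filter] at hp hq
    obtain ⟨p1, -, rfl⟩ := hp
    obtain ⟨p2, -, h⟩ := hq
    apply hab
    have := congrArg (fun p => p.getVert 1) h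
    simp at this
    exact Subtype.ext this.symm

open Classical in
lemma card_pathSet_le {V : Type} [Fintype V] {G : SimpleGraph V} {m : ℕ}
    (hg : (2 * m : ℕ) < G.egirth) {D : ℝ} (hD1 : 1 ≤ D) (hD : ∀ v, (G.degree v : ℝ) ≤ D)
    (k : ℕ) (x y : V) : ((pathSet G k x y).card : ℝ) ≤ D ^ (k - m) := by
  induction k generalizing x with
  | zero =>
    simp only [zero_le, Nat.sub_eq_zero_of_le, pow_zero]
    exact_mod_cast Finset.card_le_one.2 fun p hp q hq => by
      rw [mem_pathSet] at hp hq
      exact path_unique_of_girth hg hp.2 hq.2 (by omega) (by omega)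
  | succ k ih =>
    by_cases hk : k + 1 ≤ m
    · rw [Nat.sub_eq_zero_of_le hk, pow_zero]
      exact_mod_cast Finset.card_le_one.2 fun p hp q hq => by
        rw [mem_pathSet] at hp hq
        exact path_unique_of_girth hg hp.2 hq.2 (by omega) (by omega)
    · rw [card_pathSet_succ, show k + 1 - m = (k - m) + 1 by omega, pow_succ']
      push_cast
      calc _ ≤ ∑ w : V, if G.Adj x w then D ^ (k - m) else 0 := by
            apply Finset.sum_le_sum
            intro w _
            split_ifs
            · refine le_trans ?_ (ih w)
              exact_mod_cast Finset.card_filter_le _ _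
            · simp
        _ = (G.degree x : ℝ) * D ^ (k - m) := by
            rw [← Finset.sum_filter, Finset.sum_const, nsmul_eq_mul]
            congr 2
            rw [← G.card_neighborFinset_eq_degree, neighborFinset_eq_filter]
        _ ≤ _ := by gcongr; exact hD x

open Classical in
lemma sum_card_pathSet_succ {V : Type} [Fintype V] (G : SimpleGraph V) (k : ℕ) (y : V) :
    (∑ w, ∑ _p ∈ pathSet G k w y, ((G.degree w : ℝ) - k)) ≤
    (∑ x, ((pathSet G (k+1) x y).card : ℝ)) := by
  simp_rw [card_pathSet_succ]
  push_cast
  rw [Finset.sum_comm]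
  apply Finset.sum_le_sum
  intro w _
  have : ∀ x, (if G.Adj x w then
      (((pathSet G k w y).filter (fun p => x ∉ p.support)).card : ℝ) else 0) =
      ∑ p ∈ pathSet G k w y, if G.Adj w x ∧ x ∉ p.support then 1 else 0 := by
    intro x
    rw [G.adj_comm]
    split_ifs with h
    · rw [Finset.card_filter]
      push_cast
      simp only [h, true_and]
    · simp [h]
  simp_rw [this]
  rw [Finset.sum_comm]
  apply Finset.sum_le_sum
  intro p hp
  rw [mem_pathSet] at hp
  rw [← Finset.sum_filter, Finset.sum_const, nsmul_eq_mul, mul_one, sub_le_iff_le_add]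
  have h1 : G.neighborFinset w ⊆ (Finset.univ.filter (fun x => G.Adj w x ∧ x ∉ p.support)) ∪
      (p.support.toFinset.erase w) := by
    intro x hx
    rw [mem_neighborFinset] at hx
    simp [hx, hx.ne']
    tauto
  have h2 := (Finset.card_le_card h1).trans (Finset.card_union_le _ _)
  have h3 : (p.support.toFinset.erase w).card ≤ k := by
    rw [Finset.card_erase_of_mem (by simp)]
    have := List.toFinset_card_le p.support
    rw [Walk.length_support, hp.1] at this
    omega
  rw [G.card_neighborFinset_eq_degree] at h2
  exact_mod_cast h2.trans (by omega)

open Classical in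
lemma sum_card_pathSet_ge {V : Type} [Fintype V] (G : SimpleGraph V) (K : ℕ) {d : ℝ}
    (hd : 0 ≤ d) (hdeg : ∀ v, d + K ≤ G.degree v) (k : ℕ) (hk : k ≤ K) (y : V) :
    (G.degree y : ℝ) * d ^ k ≤ ∑ x, ((pathSet G (k+1) x y).card : ℝ) := by
  induction k with
  | zero =>
    refine le_trans ?_ (sum_card_pathSet_succ G 0 y)
    rw [← Finset.sum_subset (Finset.subset_univ {y})]
    · have : pathSet G 0 y y = {Walk.nil} := by
        ext p
        rw [mem_pathSet, Finset.mem_singleton]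
        constructor
        · rintro ⟨h, -⟩
          exact Walk.eq_nil_iff_nil.2 (Walk.length_eq_zero_iff.1 h)
        · rintro rfl; simp
      simp [this]
    · intro x _ hx
      have : pathSet G 0 x y = ∅ := by
        rw [Finset.eq_empty_iff_forall_notMem]
        intro p hp
        rw [mem_pathSet] at hp
        exact hx (by simpa using Walk.eq_of_length_eq_zero hp.1)
      simp [this]
  | succ k ih =>
    refine le_trans ?_ (sum_card_pathSet_succ G (k+1) y)
    rw [pow_succ, ← mul_assoc]
    refine (mul_le_mul_of_nonneg_right (ih (by omega)) hd).trans ?_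
    rw [Finset.sum_mul]
    apply Finset.sum_le_sum
    intro x _
    rw [Finset.sum_const, nsmul_eq_mul]
    gcongr
    have := hdeg x
    have h2 : ((k + 1 : ℕ) : ℝ) ≤ K := by exact_mod_cast hk
    linarith

open Classical in
lemma degree_mul_le {V : Type} [Fintype V] {G : SimpleGraph V} {m : ℕ} (hm : 1 ≤ m)
    (hg : (2 * m : ℕ) < G.egirth) (K : ℕ) (hK : m ≤ K) {d : ℝ}
    (hd : 0 ≤ d) (hdeg : ∀ v, d + K ≤ G.degree v) (y : V) :
    (G.degree y : ℝ) * d ^ (m-1) ≤ Fintype.card V := by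
  refine (sum_card_pathSet_ge G K hd hdeg (m-1) (by omega) y).trans ?_
  rw [Nat.sub_add_cancel hm]
  calc _ ≤ ∑ x : V, (1:ℝ) := by
        apply Finset.sum_le_sum
        intro x _
        exact_mod_cast Finset.card_le_one.2 fun p hp q hq => by
          rw [mem_pathSet] at hp hq
          exact path_unique_of_girth hg hp.2 hq.2 (by omega) (by omega)
    _ = _ := by simp

open Classical in
lemma card_bad_le {V : Type} [Fintype V] {G : SimpleGraph V} {m l : ℕ} (hm : 1 ≤ m)
    (hl : m + 1 ≤ l)
    (hg : (2 * m : ℕ) < G.egirth) {D : ℝ} (hD1 : 1 ≤ D) (hD : ∀ v, (G.degree v : ℝ) ≤ D)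
    {x y : V} (p : G.Walk x y) (hp : p.length = l) :
    (((pathSet G l x y).filter
      (fun q => ¬ ∀ w ∈ p.support, w ∈ q.support → w = x ∨ w = y)).card : ℝ)
      ≤ ((l + 1) * l) * D ^ (l - m - 1) := by
  have hsub : (pathSet G l x y).filter
      (fun q => ¬ ∀ w ∈ p.support, w ∈ q.support → w = x ∨ w = y) ⊆
      p.support.toFinset.biUnion fun w => (Finset.Ico 1 l).biUnion fun j =>
        ((pathSet G j x w) ×ˢ (pathSet G (l - j) w y)).image (fun a => a.1.append a.2) := by
    intro q hq
    rw [Finset.mem_filter, mem_pathSet] at hq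
    obtain ⟨⟨hq1, hq2⟩, hq3⟩ := hq
    push Not at hq3
    obtain ⟨w, hwp, hwq, hwx, hwy⟩ := hq3
    have h1 := Walk.length_takeUntil_lt_length hwq hwy
    have h2 := Walk.length_dropUntil_lt_length hwq hwx
    have h3 := congrArg Walk.length (q.take_spec hwq)
    rw [Walk.length_append] at h3
    simp only [Finset.mem_biUnion, Finset.mem_image, Finset.mem_product, mem_pathSet]
    refine ⟨w, by simpa using hwp, (q.takeUntil w hwq).length, ?_,
      (q.takeUntil w hwq, q.dropUntil w hwq), ?_, q.take_spec hwq⟩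
    · rw [Finset.mem_Ico]; omega
    · exact ⟨⟨rfl, hq2.takeUntil hwq⟩, by simp only; omega, hq2.dropUntil hwq⟩
  have h1 : ∀ w, ∀ j ∈ Finset.Ico 1 l,
      ((((pathSet G j x w) ×ˢ (pathSet G (l - j) w y)).image
        (fun a => a.1.append a.2)).card : ℝ) ≤ D ^ (l - m - 1) := by
    intro w j hj
    rw [Finset.mem_Ico] at hj
    calc _ ≤ (((pathSet G j x w) ×ˢ (pathSet G (l - j) w y)).card : ℝ) := by
          exact_mod_cast Finset.card_image_le
      _ = ((pathSet G j x w).card : ℝ) * ((pathSet G (l - j) w y)).card := by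
          rw [Finset.card_product]; push_cast; rfl
      _ ≤ D ^ (j - m) * D ^ (l - j - m) := by
          gcongr
          · exact card_pathSet_le hg hD1 hD _ _ _
          · exact card_pathSet_le hg hD1 hD _ _ _
      _ = D ^ ((j - m) + (l - j - m)) := by rw [pow_add]
      _ ≤ _ := pow_le_pow_right₀ hD1 (by omega)
  calc _ ≤ ((p.support.toFinset.biUnion fun w => (Finset.Ico 1 l).biUnion fun j =>
        ((pathSet G j x w) ×ˢ (pathSet G (l - j) w y)).image
          (fun a => a.1.append a.2)).card : ℝ) := by
        exact_mod_cast Finset.card_le_card hsub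
    _ ≤ ∑ w ∈ p.support.toFinset, (((Finset.Ico 1 l).biUnion fun j =>
        ((pathSet G j x w) ×ˢ (pathSet G (l - j) w y)).image
          (fun a => a.1.append a.2)).card : ℝ) := by
        exact_mod_cast Finset.card_biUnion_le
    _ ≤ ∑ w ∈ p.support.toFinset, (l : ℝ) * D ^ (l - m - 1) := by
        apply Finset.sum_le_sum
        intro w _
        calc _ ≤ ∑ j ∈ Finset.Ico 1 l, ((((pathSet G j x w) ×ˢ (pathSet G (l - j) w y)).image
                (fun a => a.1.append a.2)).card : ℝ) := by
              exact_mod_cast Finset.card_biUnion_le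
          _ ≤ ∑ j ∈ Finset.Ico 1 l, D ^ (l - m - 1) := Finset.sum_le_sum (h1 w)
          _ = ((l - 1 : ℕ) : ℝ) * D ^ (l - m - 1) := by
              rw [Finset.sum_const, nsmul_eq_mul, Nat.card_Ico]
          _ ≤ _ := by
              gcongr
              omega
    _ = (p.support.toFinset.card : ℝ) * ((l : ℝ) * D ^ (l - m - 1)) := by
        rw [Finset.sum_const, nsmul_eq_mul]
    _ ≤ ((l + 1 : ℕ) : ℝ) * ((l : ℝ) * D ^ (l - m - 1)) := by
        gcongr
        have := List.toFinset_card_le p.support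
        rwa [Walk.length_support, hp] at this
    _ = _ := by push_cast; ring

open Classical in
/-- Pairs of internally disjoint paths of length `l` from `x` to `y`. -/
noncomputable def goodSet {V : Type} [Fintype V] (G : SimpleGraph V) (l : ℕ) (x y : V) :
    Finset (G.Walk x y × G.Walk x y) :=
  (pathSet G l x y ×ˢ pathSet G l x y).filter
    (fun a => ∀ w ∈ a.1.support, w ∈ a.2.support → w = x ∨ w = y)

open Classical in
lemma sq_card_le {V : Type} [Fintype V] {G : SimpleGraph V} {m l : ℕ} (hm : 1 ≤ m)
    (hl : m + 1 ≤ l)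
    (hg : (2 * m : ℕ) < G.egirth) {D : ℝ} (hD1 : 1 ≤ D) (hD : ∀ v, (G.degree v : ℝ) ≤ D)
    (x y : V) :
    ((pathSet G l x y).card : ℝ) ^ 2 ≤ (goodSet G l x y).card +
      D ^ (l - m) * (((l + 1) * l) * D ^ (l - m - 1)) := by
  have h := Finset.card_filter_add_card_filter_not (s := pathSet G l x y ×ˢ pathSet G l x y)
    (fun a => ∀ w ∈ a.1.support, w ∈ a.2.support → w = x ∨ w = y)
  rw [Finset.card_product] at h
  have h' : ((pathSet G l x y).card : ℝ) ^ 2 = (goodSet G l x y).card +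
      (((pathSet G l x y ×ˢ pathSet G l x y).filter
        (fun a => ¬ ∀ w ∈ a.1.support, w ∈ a.2.support → w = x ∨ w = y)).card : ℝ) := by
    rw [sq]; unfold goodSet; exact_mod_cast h.symm
  rw [h']
  gcongr
  rw [Finset.card_filter, Finset.sum_product]
  push_cast
  calc _ = ∑ p ∈ pathSet G l x y, (((pathSet G l x y).filter
      (fun q => ¬ ∀ w ∈ p.support, w ∈ q.support → w = x ∨ w = y)).card : ℝ) := by
        apply Finset.sum_congr rfl
        intro p _
        rw [Finset.card_filter]; push_cast; rfl
    _ ≤ ∑ p ∈ pathSet G l x y, ((l + 1) * l) * D ^ (l - m - 1) := by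
        apply Finset.sum_le_sum
        intro p hp
        exact card_bad_le hm hl hg hD1 hD p (mem_pathSet.1 hp).1
    _ = ((pathSet G l x y).card : ℝ) * (((l + 1) * l) * D ^ (l - m - 1)) := by
        rw [Finset.sum_const, nsmul_eq_mul]
    _ ≤ _ := by
        gcongr
        exact card_pathSet_le hg hD1 hD _ _ _

lemma good_isCycle {V : Type} [Fintype V] {G : SimpleGraph V} {l : ℕ} (hl : 2 ≤ l) {x y : V}
    {p q : G.Walk x y} (h : (p, q) ∈ goodSet G l x y) : (p.append q.reverse).IsCycle := by
  classical
  simp only [goodSet, Finset.mem_filter, Finset.mem_product, mem_pathSet] at h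
  obtain ⟨⟨⟨hp1, hp2⟩, hq1, hq2⟩, h⟩ := h
  refine hp2.isCycle_append (Walk.isPath_reverse_iff q |>.mpr hq2) (fun w hw hw' ↦ ?_) ?_
  · have hq3 := (Walk.isPath_reverse_iff q |>.mpr hq2).support_nodup
    have hp3 := hp2.support_nodup
    rw [← Walk.cons_tail_support, List.nodup_cons] at hp3 hq3
    have h1 := h w (List.mem_of_mem_tail hw)
      (by have := List.mem_of_mem_tail hw'; rwa [Walk.support_reverse, List.mem_reverse] at this)
    rcases h1 with rfl | rfl
    · exact hp3.1 hw
    · exact hq3.1 hw'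
  · left; omega

lemma sum_good_le {V : Type} [Fintype V] [DecidableEq V] {G : SimpleGraph V} {l : ℕ}
    (hl : 2 ≤ l) :
    ∑ a : V × V, (goodSet G l a.1 a.2).card ≤
      ((4 * l) ^ (l + 1) * (4 * l) ^ (l + 1)) * cycleCount G (2 * l) := by
  classical
  let T : Finset (Σ a : V × V, G.Walk a.1 a.2 × G.Walk a.1 a.2) :=
    (Finset.univ : Finset (V × V)).sigma (fun a => goodSet G l a.1 a.2)
  let f : (Σ a : V × V, G.Walk a.1 a.2 × G.Walk a.1 a.2) → Finset (Sym2 V) :=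
    fun t => (t.2.1.append t.2.2.reverse).edges.toFinset
  have hT : T.card = ∑ a : V × V, (goodSet G l a.1 a.2).card := Finset.card_sigma _ _
  rw [← hT]
  have hlen : ∀ t ∈ T, t.2.1.length = l ∧ t.2.2.length = l := by
    rintro ⟨⟨x, y⟩, p, q⟩ ht
    have ht' : (p, q) ∈ goodSet G l x y := (Finset.mem_sigma.1 ht).2
    simp only [goodSet, Finset.mem_filter, Finset.mem_product, mem_pathSet] at ht'
    exact ⟨ht'.1.1.1, ht'.1.2.1⟩
  have himg : (T.image f).card ≤ cycleCount G (2 * l) := by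
    unfold cycleCount
    rw [Nat.card_eq_fintype_card, Fintype.card_subtype]
    apply Finset.card_le_card
    intro s hs
    rw [Finset.mem_image] at hs
    obtain ⟨t, ht, rfl⟩ := hs
    have hl' := hlen t ht
    obtain ⟨⟨x, y⟩, p, q⟩ := t
    have ht' : (p, q) ∈ goodSet G l x y := (Finset.mem_sigma.1 ht).2
    rw [Finset.mem_filter]
    refine ⟨Finset.mem_univ _, x, p.append q.reverse, good_isCycle hl ht', ?_, rfl⟩
    rw [Walk.length_append, Walk.length_reverse]
    simp only at hl'
    omega
  refine (Finset.card_le_mul_card_image T ((4 * l) ^ (l + 1) * (4 * l) ^ (l + 1)) ?_).trans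
    (Nat.mul_le_mul_left _ himg)
  intro s hs
  let U : Finset V := s.biUnion Sym2.toFinset
  have hU : U.card ≤ 4 * l := by
    rw [Finset.mem_image] at hs
    obtain ⟨t, ht, rfl⟩ := hs
    have hl' := hlen t ht
    have h1 : (f t).card ≤ 2 * l := by
      refine (List.toFinset_card_le _).trans ?_
      rw [Walk.length_edges, Walk.length_append, Walk.length_reverse]
      omega
    calc U.card ≤ ∑ e ∈ f t, e.toFinset.card := Finset.card_biUnion_le
      _ ≤ ∑ e ∈ f t, 2 := by
          apply Finset.sum_le_sum
          intro e _
          rw [Sym2.card_toFinset]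
          split_ifs <;> omega
      _ ≤ 4 * l := by
          rw [Finset.sum_const, smul_eq_mul]; omega
  have hcard : (Fintype.piFinset (fun _ : Fin (l+1) => U) ×ˢ
      Fintype.piFinset (fun _ : Fin (l+1) => U)).card ≤ (4 * l) ^ (l + 1) * (4 * l) ^ (l + 1) := by
    rw [Finset.card_product, Fintype.card_piFinset]
    simp only [Finset.prod_const, Finset.card_univ, Fintype.card_fin]
    gcongr
  refine le_trans ?_ hcard
  refine Finset.card_le_card_of_injOn
    (fun t => (fun i : Fin (l+1) => t.2.1.getVert i, fun i : Fin (l+1) => t.2.2.getVert i)) ?_ ?_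
  · intro t ht
    simp only [Finset.coe_filter, Set.mem_ofPred_eq] at ht
    obtain ⟨ht, rfl⟩ := ht
    have hl' := hlen t ht
    have key : ∀ v ∈ (t.2.1.append t.2.2.reverse).support, v ∈ U := by
      intro v hv
      rw [Walk.mem_support_iff_exists_mem_edges_of_not_nil] at hv
      · obtain ⟨e, he, hve⟩ := hv
        rw [Finset.mem_biUnion]
        exact ⟨e, List.mem_toFinset.2 he, Sym2.mem_toFinset.2 hve⟩
      · rw [← Walk.length_eq_zero_iff, Walk.length_append]
        omega
    simp only [Finset.coe_product, Set.mem_prod, Finset.mem_coe, Fintype.mem_piFinset]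
    constructor
    · intro i
      apply key
      rw [Walk.mem_support_append_iff]
      exact Or.inl (Walk.getVert_mem_support _ _)
    · intro i
      apply key
      rw [Walk.mem_support_append_iff, Walk.support_reverse, List.mem_reverse]
      exact Or.inr (Walk.getVert_mem_support _ _)
  · intro t ht t' ht' h
    simp only [Finset.coe_filter, Set.mem_ofPred_eq] at ht ht'
    have h1 := hlen t ht.1
    have h2 := hlen t' ht'.1
    clear ht ht'
    obtain ⟨⟨x, y⟩, p, q⟩ := t
    obtain ⟨⟨x', y'⟩, p', q'⟩ := t'
    simp only at h1 h2
    simp only [Prod.mk.injEq] at h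
    obtain ⟨ha, hb⟩ := h
    have ha' : ∀ i, i ≤ l → p.getVert i = p'.getVert i := fun i hi =>
      congrFun ha ⟨i, by omega⟩
    have hb' : ∀ i, i ≤ l → q.getVert i = q'.getVert i := fun i hi =>
      congrFun hb ⟨i, by omega⟩
    have hx := ha' 0 (by omega)
    have hy := ha' l le_rfl
    rw [Walk.getVert_zero, Walk.getVert_zero] at hx
    rw [Walk.getVert_of_length_le _ h1.1.le, Walk.getVert_of_length_le _ h2.1.le] at hy
    simp only at hx hy
    subst hx hy
    have hp : p = p' := Walk.ext_getVert_le_length (by omega) (fun k hk => ha' k (by omega))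
    have hq : q = q' := Walk.ext_getVert_le_length (by omega) (fun k hk => hb' k (by omega))
    rw [hp, hq]

open Classical in
lemma core_bound {V : Type} [Fintype V] [Nonempty V] {G : SimpleGraph V} {m l : ℕ}
    (hm : 1 ≤ m) (hl : m + 1 ≤ l)
    (hg : (2 * m : ℕ) < G.egirth) {D : ℝ} (hD1 : 1 ≤ D) (hD : ∀ v, (G.degree v : ℝ) ≤ D)
    {d : ℝ} (hd : 0 ≤ d) (hdeg : ∀ v, d + l ≤ G.degree v) :
    d ^ (2 * l) ≤ (((4 * l) ^ (l + 1) * (4 * l) ^ (l + 1) : ℕ) : ℝ) * cycleCount G (2 * l) +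
      (Fintype.card V : ℝ) ^ 2 * (D ^ (l - m) * (((l + 1) * l) * D ^ (l - m - 1))) := by
  have hsum : (Fintype.card V : ℝ) * d ^ l ≤
      ∑ a : V × V, ((pathSet G l a.1 a.2).card : ℝ) := by
    rw [Fintype.sum_prod_type_right]
    simp only
    calc _ = ∑ y : V, d ^ l := by simp
      _ ≤ _ := by
        apply Finset.sum_le_sum
        intro y _
        have := sum_card_pathSet_ge G l hd hdeg (l-1) (by omega) y
        rw [Nat.sub_add_cancel (by omega)] at this
        refine le_trans ?_ this
        calc d ^ l = d * d ^ (l - 1) := by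
              rw [← pow_succ', Nat.sub_add_cancel (by omega)]
          _ ≤ _ := by
              gcongr
              have := hdeg y
              have h0 : (0:ℝ) ≤ l := by positivity
              linarith
  have hcs := sq_sum_le_card_mul_sum_sq (s := (Finset.univ : Finset (V × V)))
    (f := fun a => ((pathSet G l a.1 a.2).card : ℝ))
  have hcard : ((Finset.univ : Finset (V × V)).card : ℝ) = (Fintype.card V : ℝ) ^ 2 := by
    rw [Finset.card_univ, Fintype.card_prod]; push_cast; ring
  rw [hcard] at hcs
  have hpos : (0 : ℝ) < (Fintype.card V : ℝ) ^ 2 := by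
    have := Fintype.card_pos (α := V)
    positivity
  have h1 : ((Fintype.card V : ℝ) * d ^ l) ^ 2 ≤
      (∑ a : V × V, ((pathSet G l a.1 a.2).card : ℝ)) ^ 2 := by
    gcongr
  have h2 : d ^ (2 * l) ≤ ∑ a : V × V, ((pathSet G l a.1 a.2).card : ℝ) ^ 2 := by
    have := h1.trans hcs
    rw [mul_pow, ← pow_mul, mul_comm l 2] at this
    exact le_of_mul_le_mul_left this hpos
  refine h2.trans ?_
  calc _ ≤ ∑ a : V × V, (((goodSet G l a.1 a.2).card : ℝ) +
        D ^ (l - m) * (((l + 1) * l) * D ^ (l - m - 1))) :=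
        Finset.sum_le_sum fun a _ => sq_card_le hm hl hg hD1 hD a.1 a.2
    _ = ((∑ a : V × V, (goodSet G l a.1 a.2).card : ℕ) : ℝ) + (Fintype.card V : ℝ) ^ 2 *
        (D ^ (l - m) * (((l + 1) * l) * D ^ (l - m - 1))) := by
        rw [Finset.sum_add_distrib, Finset.sum_const, nsmul_eq_mul, hcard]
        push_cast; rfl
    _ ≤ _ := by
        gcongr
        exact_mod_cast sum_good_le (G := G) (l := l) (by omega)

open Classical in
lemma exists_dense_aux {V : Type} [Fintype V] (G : SimpleGraph V) {t : ℝ}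
    (S : Finset V) (hS : S.Nonempty)
    (h : 2 * t * S.card ≤ ∑ u ∈ S, ∑ v ∈ S, if G.Adj u v then (1:ℝ) else 0) :
    ∃ S' : Finset V, S'.Nonempty ∧ ∀ v ∈ S', t ≤ ∑ u ∈ S', if G.Adj v u then (1:ℝ) else 0 := by
  induction S using Finset.strongInduction with
  | H S ih =>
    by_cases hall : ∀ v ∈ S, t ≤ ∑ u ∈ S, if G.Adj v u then (1:ℝ) else 0
    · exact ⟨S, hS, hall⟩
    · push Not at hall
      obtain ⟨v, hv, hlt⟩ := hall
      have hss := Finset.erase_ssubset hv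
      have hvn : v ∉ S.erase v := Finset.notMem_erase v S
      have hcard : (S.card : ℝ) = (S.erase v).card + 1 := by
        exact_mod_cast (Finset.card_erase_add_one hv).symm
      have e1 : ∑ u ∈ S, (if G.Adj v u then (1:ℝ) else 0) =
          ∑ u ∈ S.erase v, (if G.Adj v u then (1:ℝ) else 0) := by
        rw [← Finset.add_sum_erase _ _ hv]; simp
      have e2 : ∑ u ∈ S, ∑ w ∈ S, (if G.Adj u w then (1:ℝ) else 0) =
          ∑ u ∈ S.erase v, ∑ w ∈ S.erase v, (if G.Adj u w then (1:ℝ) else 0) +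
          2 * ∑ u ∈ S, (if G.Adj v u then (1:ℝ) else 0) := by
        rw [← Finset.add_sum_erase _ _ hv]
        have : ∀ u ∈ S.erase v, ∑ w ∈ S, (if G.Adj u w then (1:ℝ) else 0) =
            (if G.Adj v u then (1:ℝ) else 0) +
            ∑ w ∈ S.erase v, (if G.Adj u w then (1:ℝ) else 0) := by
          intro u _
          rw [← Finset.add_sum_erase _ _ hv, G.adj_comm]
        rw [Finset.sum_congr rfl this, Finset.sum_add_distrib, ← e1]
        ring
      rw [e2, hcard] at h
      rcases (S.erase v).eq_empty_or_nonempty with he | hne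
      · rw [he, Finset.sum_empty, Finset.card_empty] at h
        push_cast at h
        exfalso
        linarith
      · exact ih _ hss hne (by linarith)

open Classical in
lemma degree_induce_eq {V : Type} [Fintype V] (G : SimpleGraph V) (S : Finset V)
    (v : (S : Set V)) :
    (((G.induce (S : Set V)).degree v : ℕ) : ℝ) =
      ∑ u ∈ S, if G.Adj v u then (1:ℝ) else 0 := by
  rw [← card_neighborFinset_eq_degree, Finset.sum_boole]
  congr 1
  refine Finset.card_bij (fun a _ => a.1) ?_ ?_ ?_
  · intro a ha
    rw [mem_neighborFinset] at ha
    exact Finset.mem_filter.2 ⟨a.2, ha⟩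
  · intro a _ b _ h
    exact Subtype.ext h
  · intro b hb
    rw [Finset.mem_filter] at hb
    exact ⟨⟨b, hb.1⟩, by rw [mem_neighborFinset]; exact hb.2, rfl⟩

lemma cycleCount_induce_le {V : Type} [Fintype V] [DecidableEq V] (G : SimpleGraph V)
    (S : Set V) [DecidableEq S] (L : ℕ) : cycleCount (G.induce S) L ≤ cycleCount G L := by
  classical
  unfold cycleCount
  have hinj : Function.Injective (Subtype.val : S → V) := Subtype.val_injective
  refine Nat.card_le_card_of_injective
    (fun s => ⟨s.1.image (Sym2.map (Subtype.val : S → V)), ?_⟩) ?_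
  · obtain ⟨s, u, w, hw, hL, rfl⟩ := s
    refine ⟨_, w.map (Embedding.induce S).toHom, hw.map (Embedding.induce (G := G) S).injective, ?_, ?_⟩
    · rw [Walk.length_map, hL]
    · ext e
      rw [List.mem_toFinset, Walk.edges_map, List.mem_map, Finset.mem_image]
      simp only [List.mem_toFinset]
      rfl
  · intro s s' h
    have h' := congrArg Subtype.val h
    exact Subtype.ext (Finset.image_injective (Sym2.map.injective hinj) h')

lemma egirth_induce {V : Type} (G : SimpleGraph V) (S : Set V) :
    G.egirth ≤ (G.induce S).egirth :=
  IsContained.egirth_le ⟨(Embedding.induce S).toCopy⟩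

lemma single_length (c : ℝ) (hc : 0 < c) (m l : ℕ) (hm : 2 ≤ m) (hl : m + 1 ≤ l) :
    ∃ (α : ℝ) (N : ℕ), 0 < α ∧
      ∀ (V : Type) [Fintype V] [DecidableEq V] (G : SimpleGraph V) (n : ℕ),
        Fintype.card V = n → N ≤ n →
        c * (n : ℝ) ^ ((1 : ℝ) + 1 / m) ≤ (G.edgeSet.ncard : ℝ) →
        (2 * m : ℕ) < G.egirth →
          α * (n : ℝ) ^ ((2 * l : ℝ) / m) ≤ (cycleCount G (2 * l) : ℝ) := by
  -- constants
  obtain ⟨κ, hκ⟩ : ∃ κ : ℝ, κ = ((c / 2) ^ (m - 1))⁻¹ := ⟨_, rfl⟩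
  have hκ0 : 0 < κ := by rw [hκ]; positivity
  obtain ⟨C, hC⟩ : ∃ C : ℝ, C = κ ^ (l - m) * (((l + 1) * l) * κ ^ (l - m - 1)) := ⟨_, rfl⟩
  obtain ⟨β, hβ⟩ : ∃ β : ℝ, β = (c / 2) ^ (2 * l) := ⟨_, rfl⟩
  have hβ0 : 0 < β := by rw [hβ]; positivity
  obtain ⟨A, hA⟩ : ∃ A : ℕ, A = (4 * l) ^ (l + 1) * (4 * l) ^ (l + 1) := ⟨_, rfl⟩
  have hl0 : 0 < l := by omega
  have hA0 : (0 : ℝ) < A := by rw [hA]; push_cast; positivity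
  obtain ⟨T, hT⟩ : ∃ T : ℝ, T = max 1 (max (2 * l / c) (2 * C / β)) := ⟨_, rfl⟩
  have hT1 : 1 ≤ T := hT ▸ le_max_left _ _
  have hT2 : 2 * l / c ≤ T := hT ▸ (le_max_left _ _).trans (le_max_right _ _)
  have hT3 : 2 * C / β ≤ T := hT ▸ (le_max_right _ _).trans (le_max_right _ _)
  refine ⟨β / 2 / A, ⌈T ^ m⌉₊, by positivity, ?_⟩
  intro V _ _ G n hn hN he hg
  classical
  have hm0 : (m : ℝ) ≠ 0 := by positivity
  obtain ⟨t, ht⟩ : ∃ t : ℝ, t = (n : ℝ) ^ ((1 : ℝ) / m) := ⟨_, rfl⟩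
  have ht0 : 0 ≤ t := by rw [ht]; positivity
  have htm : t ^ m = n := by
    rw [ht, ← Real.rpow_natCast, ← Real.rpow_mul (by positivity)]
    field_simp
    simp
  have hTt : T ≤ t := by
    have h1 : T ^ m ≤ t ^ m := by rw [htm]; exact Nat.ceil_le.1 hN
    exact le_of_pow_le_pow_left₀ (by omega) ht0 h1
  have ht1 : 1 ≤ t := hT1.trans hTt
  have hn0 : (0:ℝ) < n := by rw [← htm]; positivity
  have hpow : (n : ℝ) ^ ((2 * l : ℝ) / m) = t ^ (2 * l) := by
    rw [ht, ← Real.rpow_natCast, ← Real.rpow_mul (by positivity)]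
    congr 1
    push_cast
    field_simp
  have hpow1 : (n : ℝ) ^ ((1 : ℝ) + 1 / m) = n * t := by
    rw [Real.rpow_add hn0, Real.rpow_one, ht]
  rw [hpow]
  rw [hpow1] at he
  -- dense part
  have hVne : (Finset.univ : Finset V).Nonempty := by
    rw [← Finset.card_pos, Finset.card_univ, hn]
    exact_mod_cast hn0
  obtain ⟨S, hSne, hS⟩ := exists_dense_aux G (t := c * t) Finset.univ hVne (by
    have h1 := G.sum_degrees_eq_twice_card_edges
    have h2 : (G.edgeSet.ncard : ℝ) = G.edgeFinset.card := by
      rw [← coe_edgeFinset, Set.ncard_coe_finset]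
    have h3 : ∑ u ∈ (Finset.univ : Finset V), ∑ v ∈ (Finset.univ : Finset V),
        (if G.Adj u v then (1:ℝ) else 0) = ((∑ v, G.degree v : ℕ) : ℝ) := by
      push_cast
      apply Finset.sum_congr rfl
      intro u _
      rw [Finset.sum_boole, ← card_neighborFinset_eq_degree, neighborFinset_eq_filter]
    rw [h3, h1, Finset.card_univ, hn]
    push_cast
    rw [← h2]
    linarith)
  have hHg : (2 * m : ℕ) < (G.induce (S : Set V)).egirth := hg.trans_le (egirth_induce G _)
  have : Nonempty (S : Set V) := ⟨⟨hSne.choose, hSne.choose_spec⟩⟩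
  have hdegc : ∀ v, c * t ≤ ((G.induce (S : Set V)).degree v : ℝ) := by
    intro v
    rw [degree_induce_eq]
    exact hS v.1 v.2
  have hlt : 2 * l ≤ c * t := by
    rw [div_le_iff₀ hc] at hT2
    nlinarith
  obtain ⟨d, hd⟩ : ∃ d : ℝ, d = c / 2 * t := ⟨_, rfl⟩
  have hd0 : 0 < d := by rw [hd]; positivity
  have hdeg : ∀ v, d + l ≤ ((G.induce (S : Set V)).degree v : ℝ) := by
    intro v
    have := hdegc v
    rw [hd]; linarith
  have hcardS : (Fintype.card (S : Set V) : ℝ) ≤ t ^ m := by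
    rw [htm, ← hn]
    exact_mod_cast Fintype.card_le_of_injective _ (Subtype.val_injective (p := (· ∈ (S : Set V))))
  have hD : ∀ v, ((G.induce (S : Set V)).degree v : ℝ) ≤ κ * t := by
    intro v
    have h1 := (degree_mul_le (by omega) hHg l (by omega) hd0.le hdeg v).trans hcardS
    rw [hd, mul_pow] at h1
    have h2 : t ^ m = t * t ^ (m - 1) := by
      rw [← pow_succ', Nat.sub_add_cancel (by omega)]
    rw [h2, ← mul_assoc] at h1
    have h3 := le_of_mul_le_mul_right h1 (by positivity)
    rw [hκ, inv_mul_eq_div, le_div_iff₀ (by positivity)]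
    exact h3
  have hD1 : 1 ≤ κ * t := by
    have v : (S : Set V) := Classical.arbitrary _
    have h1 := hdeg v
    have h2 := hD v
    have h3 : (1:ℝ) ≤ l := by exact_mod_cast hl0
    linarith
  have hcore := core_bound (by omega) hl hHg hD1 hD hd0.le hdeg
  rw [← hA] at hcore
  have hind := Nat.cast_le (α := ℝ).2 (@cycleCount_induce_le V _ _ G (S : Set V)
    (fun a b => Classical.propDecidable (a = b)) (2 * l))
  have hbad : (Fintype.card (S : Set V) : ℝ) ^ 2 *
      ((κ * t) ^ (l - m) * (((l + 1) * l) * (κ * t) ^ (l - m - 1))) ≤ C * t ^ (2 * l - 1) := by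
    calc _ ≤ (t ^ m) ^ 2 *
      ((κ * t) ^ (l - m) * (((l + 1) * l) * (κ * t) ^ (l - m - 1))) := by gcongr
      _ = C * (t ^ (m * 2) * t ^ (l - m) * t ^ (l - m - 1)) := by
        rw [hC, mul_pow, mul_pow, ← pow_mul]; ring
      _ = _ := by
        rw [← pow_add, ← pow_add]
        congr 2
        omega
  have hmain : β * t ^ (2 * l) ≤ A * cycleCount G (2 * l) + C * t ^ (2 * l - 1) := by
    have : d ^ (2 * l) = β * t ^ (2 * l) := by rw [hd, hβ, mul_pow]
    rw [← this]
    exact hcore.trans (add_le_add (mul_le_mul_of_nonneg_left hind hA0.le) hbad)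
  have hCt : C * t ^ (2 * l - 1) ≤ β / 2 * t ^ (2 * l) := by
    have h2 : t ^ (2 * l) = t * t ^ (2 * l - 1) := by
      rw [← pow_succ', Nat.sub_add_cancel (by omega)]
    rw [h2, ← mul_assoc]
    gcongr
    have := hT3.trans hTt
    rw [div_le_iff₀ hβ0] at this
    linarith
  rw [div_mul_eq_mul_div, div_le_iff₀ hA0]
  linarith

/-- For every real `c > 0` and integers `M > m ≥ 2` there exist `α > 0` and `N` such
that every graph `G` on `n ≥ N` vertices with at least `c·n^{1+1/m}` edges and girth
greater than `2m` has, for every `m+1 ≤ ℓ ≤ M`, at least `α·n^{2ℓ/m}` cycles of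
length `2ℓ`. -/
theorem main_theorem (c : ℝ) (hc : 0 < c) (M m : ℕ) (hm : 2 ≤ m) (hM : m < M) :
    ∃ (α : ℝ) (N : ℕ), 0 < α ∧
      ∀ (V : Type) [Fintype V] [DecidableEq V] (G : SimpleGraph V) (n : ℕ),
        Fintype.card V = n → N ≤ n →
        c * (n : ℝ) ^ ((1 : ℝ) + 1 / m) ≤ (G.edgeSet.ncard : ℝ) →
        (2 * m : ℕ) < G.egirth →
        ∀ ℓ : ℕ, m + 1 ≤ ℓ → ℓ ≤ M →
          α * (n : ℝ) ^ ((2 * ℓ : ℝ) / m) ≤ (cycleCount G (2 * ℓ) : ℝ) := by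
  have h := fun l : {l : ℕ // m + 1 ≤ l} => single_length c hc m l.1 hm l.2
  choose a N ha hN using h
  let I : Finset {l : ℕ // m + 1 ≤ l} := (Finset.Icc (m + 1) M).subtype _
  have hI : I.Nonempty := ⟨⟨m + 1, le_rfl⟩, by simp [I]; omega⟩
  obtain ⟨l0, -, hl0⟩ := I.exists_min_image a hI
  refine ⟨a l0, I.sup N, ha l0, ?_⟩
  intro V _ _ G n hn hNn he hg l hl hlM
  have hmem : (⟨l, hl⟩ : {l : ℕ // m + 1 ≤ l}) ∈ I := by simp [I]; omega
  refine le_trans ?_ (hN ⟨l, hl⟩ V G n hn ((Finset.le_sup hmem).trans hNn) he hg)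
  exact mul_le_mul_of_nonneg_right (hl0 _ hmem) (by positivity)
end
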